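/- Let p : ℤ/7ℤ → ℝ² be seven points that affinely span ℝ², and for each i ∈ ℤ/7ℤ let cᵢ be a linear functional on ℝ² and βᵢ a real number such that cᵢ(pᵢ) = βᵢ, cᵢ(p_{i+1}) = βᵢ, and cᵢ(p_j) > βᵢ for every j ∉ {i, i+1} (indices mod 7). Then the 7×7 matrix S defined by S_{ij} = cᵢ(p_j) − βᵢ has nonnegative rank at most 6; that is, there exist a 7×6 matrix B and a 6×7 matrix C, both with all entries nonnegative, such that S = B·C. -/

import Mathlib

/-!
Choose homogeneous coordinates for the vertices and let `[i j k]` be the determinant of three of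
them. Up to positive factors on its rows, the slack matrix is `E i j = [i, i + 1, j]`.

Rescale the seven columns so that `v₁ + v₃ = v₀ + v₂` and `v₀ + v₅ = v₄ + v₆`. Then they are seven
of the nine sums `x a + y b` with `a`, `b` in `Fin 3`:

  `v₁  v₂  ∗`
  `v₀  v₃  v₄`
  `v₆  ∗   v₅`

If the two missing entries `v₁ + v₄ - v₀` and `v₃ + v₆ - v₀` are also nonnegative on every edge,
each row of the slack matrix is a nonnegative array `x a + y b`. Such an array can be written with
nonnegative `x` and `y`, so `3 + 3` rank-one terms suffice.

Only two of the required inequalities, those in `IsBalanced`, do not hold automatically. They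
depend on which vertex is labelled `0`, and multiplying suitable inequalities around the heptagon
shows that they cannot fail for every choice of that vertex.
-/

open Matrix

section NonnegFactorization

variable {R m n m' n' κ κ' : Type*} [Fintype κ'] [Fintype κ]

/-- `A` is a product of two entrywise nonnegative matrices with inner index type `κ`; that is, the
nonnegative rank of `A` is at most the cardinality of `κ`. -/
def HasNonnegFactorization (κ : Type*) [Fintype κ] [Semiring R] [LE R] (A : Matrix m n R) : Prop :=
  ∃ (B : Matrix m κ R) (C : Matrix κ n R), (∀ i k, 0 ≤ B i k) ∧ (∀ k j, 0 ≤ C k j) ∧ A = B * C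

namespace HasNonnegFactorization

theorem submatrix [Semiring R] [LE R] {A : Matrix m n R} (hA : HasNonnegFactorization κ A)
    (f : m' → m) (g : n' → n) : HasNonnegFactorization κ (A.submatrix f g) := by
  obtain ⟨B, C, hB, hC, rfl⟩ := hA
  exact ⟨B.submatrix f id, C.submatrix id g, fun _ _ => hB _ _, fun _ _ => hC _ _,
    submatrix_mul B C f id g Function.bijective_id⟩

theorem congr [Semiring R] [LE R] {A : Matrix m n R} (hA : HasNonnegFactorization κ A)
    (e : κ ≃ κ') : HasNonnegFactorization κ' A := by
  obtain ⟨B, C, hB, hC, rfl⟩ := hA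
  exact ⟨B.submatrix id e.symm, C.submatrix e.symm id, fun _ _ => hB _ _, fun _ _ => hC _ _,
    by rw [submatrix_mul_equiv, submatrix_id_id]⟩

variable [Semiring R] [PartialOrder R] [IsOrderedRing R] {A : Matrix m n R}

theorem diagonal_mul [Fintype m] [DecidableEq m] (hA : HasNonnegFactorization κ A) {r : m → R}
    (hr : ∀ i, 0 ≤ r i) : HasNonnegFactorization κ (diagonal r * A) := by
  obtain ⟨B, C, hB, hC, rfl⟩ := hA
  refine ⟨diagonal r * B, C, fun i k => ?_, hC, (Matrix.mul_assoc _ _ _).symm⟩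
  simpa only [Matrix.diagonal_mul] using mul_nonneg (hr i) (hB i k)

theorem mul_diagonal [Fintype n] [DecidableEq n] (hA : HasNonnegFactorization κ A) {r : n → R}
    (hr : ∀ j, 0 ≤ r j) : HasNonnegFactorization κ (A * diagonal r) := by
  obtain ⟨B, C, hB, hC, rfl⟩ := hA
  refine ⟨B, C * diagonal r, hB, fun k j => ?_, Matrix.mul_assoc _ _ _⟩
  simpa only [Matrix.mul_diagonal] using mul_nonneg (hC k j) (hr j)

theorem of_mul_diagonal {K : Type*} [Field K] [LinearOrder K] [IsStrictOrderedRing K] [Fintype n]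
    [DecidableEq n] {A : Matrix m n K} {r : n → K} (hr : ∀ j, 0 < r j)
    (h : HasNonnegFactorization κ (A * diagonal r)) : HasNonnegFactorization κ A := by
  have hA : A = A * diagonal r * diagonal r⁻¹ := by
    ext i j
    rw [Matrix.mul_diagonal, Matrix.mul_diagonal, Pi.inv_apply, mul_inv_cancel_right₀ (hr j).ne']
  rw [hA]
  exact h.mul_diagonal fun j => (inv_pos.mpr (hr j)).le

end HasNonnegFactorization

theorem exists_nonneg_add_eq {α β : Type*} [Finite α] [Nonempty α] [AddCommGroup R] [LinearOrder R]
    [IsOrderedAddMonoid R] (u : α → R) (v : β → R) (h : ∀ a b, 0 ≤ u a + v b) :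
    ∃ (u' : α → R) (v' : β → R), (∀ a, 0 ≤ u' a) ∧ (∀ b, 0 ≤ v' b) ∧
      ∀ a b, u' a + v' b = u a + v b := by
  obtain ⟨a₀, ha₀⟩ := Finite.exists_min u
  exact ⟨fun a => u a - u a₀, fun b => u a₀ + v b, fun a => sub_nonneg.mpr (ha₀ a), h a₀,
    fun a b => by rw [← add_assoc, sub_add_cancel]⟩

theorem hasNonnegFactorization_add {α β : Type*} [Fintype α] [Fintype β] [Nonempty α] [Ring R]
    [LinearOrder R] [IsOrderedRing R] (u : m → α → R) (v : m → β → R)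
    (h : ∀ i a b, 0 ≤ u i a + v i b) :
    HasNonnegFactorization (α ⊕ β) (of fun i (p : α × β) => u i p.1 + v i p.2) := by
  classical
  choose u' v' hu' hv' huv using fun i => exists_nonneg_add_eq (u i) (v i) (h i)
  refine ⟨of fun i => Sum.elim (u' i) (v' i),
    of fun k p => k.elim (fun a => if a = p.1 then 1 else 0) (fun b => if b = p.2 then 1 else 0),
    fun i => Sum.forall.mpr ⟨hu' i, hv' i⟩, fun k p => ?_, ?_⟩
  · cases k <;> simp only [of_apply, Sum.elim_inl, Sum.elim_inr] <;> split_ifs <;> simp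
  · ext i p
    simp [Matrix.mul_apply, huv]

end NonnegFactorization

section Plucker

variable {ι R : Type*} [CommRing R]

/-- The bracket `[i j k]`, a Plücker coordinate of `M`: the determinant of the columns `i`, `j`
and `k`. -/
def plucker (M : Matrix (Fin 3) ι R) (i j k : ι) : R :=
  (M.submatrix id ![i, j, k]).det

variable (M : Matrix (Fin 3) ι R) (a b c d e f u v : ι)

theorem plucker_submatrix {ι' : Type*} (g : ι' → ι) (i j k : ι') :
    plucker (M.submatrix id g) i j k = plucker M (g i) (g j) (g k) := by
  simp only [plucker, det_fin_three]
  rfl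

theorem plucker_rotate : plucker M b c a = plucker M a b c := by
  simp only [plucker, det_fin_three, submatrix_apply, id, cons_val]
  ring

theorem plucker_self_left : plucker M a b a = 0 :=
  det_zero_of_column_eq (i := 0) (j := 2) (by decide) fun _ => rfl

theorem plucker_self_right : plucker M a b b = 0 :=
  det_zero_of_column_eq (i := 1) (j := 2) (by decide) fun _ => rfl

-- Apply `[u v ·]` to the linear dependence that Cramer's rule gives between four vectors.
theorem plucker_cramer :
    plucker M a b d * plucker M u v c + plucker M b c d * plucker M u v a =
      plucker M a b c * plucker M u v d + plucker M c d a * plucker M u v b := by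
  simp only [plucker, det_fin_three, submatrix_apply, id, cons_val]
  ring

theorem plucker_pentagon :
    plucker M c d a * plucker M d e b =
      plucker M a b d * plucker M c d e + plucker M b c d * plucker M d e a := by
  simp only [plucker, det_fin_three, submatrix_apply, id, cons_val]
  ring

theorem plucker_pentagon_reflect :
    plucker M a b d * plucker M b c e =
      plucker M d e b * plucker M a b c + plucker M b c d * plucker M a b e := by
  simp only [plucker, det_fin_three, submatrix_apply, id, cons_val]
  ring

theorem plucker_hexagon :
    plucker M c d a * plucker M e f b * plucker M d e b =
      plucker M e f a * plucker M b c d * plucker M d e b +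
        (plucker M b c d * plucker M d e f * plucker M a b e +
          plucker M e f b * plucker M a b d * plucker M c d e) := by
  simp only [plucker, det_fin_three, submatrix_apply, id, cons_val]
  ring

theorem plucker_hexagon_reflect :
    plucker M c d f * plucker M a b e * plucker M b c e =
      plucker M a b f * plucker M c d e * plucker M b c e +
        (plucker M c d e * plucker M a b c * plucker M e f b +
          plucker M a b e * plucker M e f c * plucker M b c d) := by
  simp only [plucker, det_fin_three, submatrix_apply, id, cons_val]
  ring

end Plucker

section Rank

variable {K m n : Type*} [Field K] [Fintype n]

theorem det_submatrix_eq_zero_of_rank_lt {k : Type*} [Fintype k] [DecidableEq k]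
    {A : Matrix m n K} (h : A.rank < Fintype.card k) (r : k → m) (c : k → n) :
    (A.submatrix r c).det = 0 := by
  by_contra hdet
  have hunit : IsUnit (A.submatrix r c) := (isUnit_iff_isUnit_det _).mpr (Ne.isUnit hdet)
  exact ((rank_of_isUnit _ hunit).symm.trans_le (A.rank_submatrix_le r c)).not_gt h

theorem rank_dual_apply_sub_le {E : Type*} [AddCommGroup E] [Module K E] [FiniteDimensional K E]
    (f : m → Module.Dual K E) (β : m → K) (p : n → E) :
    (of fun i j => f i (p j) - β i).rank ≤ Module.finrank K E + 1 := by
  let b := Module.finBasis K E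
  let F : Matrix m (Fin (Module.finrank K E) ⊕ Unit) K :=
    of fun i => Sum.elim (fun k => f i (b k)) (fun _ => -β i)
  let P : Matrix (Fin (Module.finrank K E) ⊕ Unit) n K :=
    of fun k j => Sum.elim (b.repr (p j)) 1 k
  have hFP : (of fun i j => f i (p j) - β i) = F * P := by
    ext i j
    have hf : f i (p j) = ∑ k, b.repr (p j) k * f i (b k) := by
      conv_lhs => rw [← b.sum_repr (p j)]
      simp only [map_sum, map_smul, smul_eq_mul]
    simp [F, P, Matrix.mul_apply, hf, sub_eq_add_neg, mul_comm]
  calc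
    _ = (F * P).rank := by rw [hFP]
    _ ≤ F.rank := rank_mul_le_left F P
    _ ≤ _ := F.rank_le_card_width.trans_eq (by simp)

-- Expand the vanishing `4 × 4` minor on columns `a`, `b`, `j`, `k` along its row `i`.
theorem mul_plucker_eq_of_rank_le {S : Matrix m n K} (hS : S.rank ≤ 3) (r : Fin 3 → m) {i : m}
    {a b : n} (ha : S i a = 0) (hb : S i b = 0) (j k : n) :
    S i j * plucker (S.submatrix r id) a b k = S i k * plucker (S.submatrix r id) a b j := by
  let N := S.submatrix (vecCons i r) ![a, b, j, k]
  have hN : N.det = 0 := det_submatrix_eq_zero_of_rank_lt (hS.trans_lt (by simp)) _ _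
  have hk : (N.submatrix Fin.succ (Fin.succAbove 2)).det = plucker (S.submatrix r id) a b k := by
    congr 1
    ext p q
    fin_cases q <;> rfl
  have hj : (N.submatrix Fin.succ (Fin.succAbove 3)).det = plucker (S.submatrix r id) a b j := by
    congr 1
    ext p q
    fin_cases q <;> rfl
  have hexpand : N.det = S i j * plucker (S.submatrix r id) a b k -
      S i k * plucker (S.submatrix r id) a b j := by
    rw [det_succ_row_zero, Fin.sum_univ_four, hk, hj]
    simp only [N, submatrix_apply, cons_val, ha, hb, mul_zero, zero_mul, Fin.coe_ofNat_eq_mod]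
    ring
  exact sub_eq_zero.mp (hexpand.symm.trans hN)

end Rank

section Polygon

variable {n : ℕ} {K : Type*}

/-- The sign pattern of the slack matrix of an `n`-gon: row `i` vanishes at the endpoints `i` and
`i + 1` of the edge `i` and is positive at the other vertices. -/
structure IsPolygonSlack [Zero K] [LT K] (S : Matrix (ZMod n) (ZMod n) K) : Prop where
  apply_self (i : ZMod n) : S i i = 0
  apply_add_one (i : ZMod n) : S i (i + 1) = 0
  pos {i j : ZMod n} (h : j ≠ i) (h' : j ≠ i + 1) : 0 < S i j

/-- The matrix of brackets `[i, i + 1, j]`. Up to scaling of its rows, this is the slack matrix of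
the polygon whose vertices have the columns of `M` as homogeneous coordinates. -/
def edgePlucker [CommRing K] (M : Matrix (Fin 3) (ZMod n) K) : Matrix (ZMod n) (ZMod n) K :=
  of fun i j => plucker M i (i + 1) j

namespace IsPolygonSlack

theorem nonneg [Zero K] [Preorder K] {S : Matrix (ZMod n) (ZMod n) K} (hS : IsPolygonSlack S)
    (i j : ZMod n) : 0 ≤ S i j := by
  by_cases hj : j = i
  · exact (hj.symm ▸ hS.apply_self i : S i j = 0).ge
  by_cases hj' : j = i + 1
  · exact (hj'.symm ▸ hS.apply_add_one i : S i j = 0).ge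
  exact (hS.pos hj hj').le

theorem rotate [Zero K] [LT K] {S : Matrix (ZMod n) (ZMod n) K} (hS : IsPolygonSlack S)
    (t : ZMod n) : IsPolygonSlack (S.submatrix (t + ·) (t + ·)) where
  apply_self i := hS.apply_self _
  apply_add_one i := by simpa only [submatrix_apply, ← add_assoc] using hS.apply_add_one (t + i)
  pos h h' := hS.pos (fun e => h (add_left_cancel e))
    fun e => h' (add_left_cancel (e.trans (add_assoc _ _ _)))

theorem mul_diagonal [NeZero n] [Semiring K] [PartialOrder K] [IsStrictOrderedRing K]
    {S : Matrix (ZMod n) (ZMod n) K} (hS : IsPolygonSlack S) {r : ZMod n → K}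
    (hr : ∀ j, 0 < r j) : IsPolygonSlack (S * diagonal r) where
  apply_self i := by rw [Matrix.mul_diagonal, hS.apply_self, zero_mul]
  apply_add_one i := by rw [Matrix.mul_diagonal, hS.apply_add_one, zero_mul]
  pos h h' := by simpa only [Matrix.mul_diagonal] using mul_pos (hS.pos h h') (hr _)

section

variable [NeZero (2 : ZMod n)] [Zero K] [LT K] {S : Matrix (ZMod n) (ZMod n) K}

theorem pos_add_two (hS : IsPolygonSlack S) (i : ZMod n) : 0 < S i (i + 2) := by
  have : Nontrivial (ZMod n) := ⟨2, 0, two_ne_zero⟩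
  refine hS.pos (by simp [two_ne_zero]) fun h => one_ne_zero (α := ZMod n) ?_
  linear_combination h

theorem pos_add_one_self (hS : IsPolygonSlack S) (i : ZMod n) : 0 < S (i + 1) i := by
  have : Nontrivial (ZMod n) := ⟨2, 0, two_ne_zero⟩
  refine hS.pos (by simp) fun h => two_ne_zero (α := ZMod n) ?_
  linear_combination -h

end

end IsPolygonSlack

theorem edgePlucker_rotate [CommRing K] (M : Matrix (Fin 3) (ZMod n) K) (t : ZMod n) :
    edgePlucker (M.submatrix id (t + ·)) = (edgePlucker M).submatrix (t + ·) (t + ·) := by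
  ext i j
  simp only [edgePlucker, of_apply, submatrix_apply, plucker_submatrix, add_assoc]

theorem edgePlucker_add_one_self [CommRing K] (M : Matrix (Fin 3) (ZMod n) K) (i : ZMod n) :
    edgePlucker M (i + 1) i = edgePlucker M i (i + 2) := by
  rw [edgePlucker, of_apply, of_apply, plucker_rotate, add_assoc, one_add_one_eq_two]

theorem forall_of_forall_imp_add [NeZero n] {P : ZMod n → Prop} {s : ZMod n} (hs : IsUnit s)
    (hP : ∀ t, P t → P (t + s)) {t₀ : ZMod n} (h₀ : P t₀) (t : ZMod n) : P t := by
  have hmul (k : ℕ) : P (t₀ + k * s) := by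
    induction k with
    | zero => simpa using h₀
    | succ k ih => simpa [add_mul, add_assoc] using hP _ ih
  obtain ⟨u, rfl⟩ := hs
  simpa using hmul ((t - t₀) * ↑u⁻¹ : ZMod n).val

variable [Field K] [LinearOrder K] [IsStrictOrderedRing K] [NeZero (2 : ZMod n)]
  {S : Matrix (ZMod n) (ZMod n) K}

theorem edgePlucker_zero_two_pos (hS : IsPolygonSlack S) :
    0 < edgePlucker (S.submatrix ![0, 1, 2] id) 0 2 := by
  have h₀₁ : S 0 1 = 0 := by simpa using hS.apply_add_one 0
  have h₀₂ : 0 < S 0 2 := by simpa using hS.pos_add_two 0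
  have h₁₀ : 0 < S 1 0 := by simpa using hS.pos_add_one_self 0
  have h₂₁ : 0 < S 2 1 := by simpa [one_add_one_eq_two] using hS.pos_add_one_self 1
  have hM : (S.submatrix ![0, 1, 2] id).submatrix id ![0, 1, 2] =
      !![0, 0, S 0 2; S 1 0, 0, S 1 2; S 2 0, S 2 1, 0] := by
    ext p q
    fin_cases p <;> fin_cases q <;> first | rfl | exact hS.apply_self _ | exact h₀₁
  have hdet : edgePlucker (S.submatrix ![0, 1, 2] id) 0 2 = S 0 2 * S 1 0 * S 2 1 := by
    rw [edgePlucker, of_apply, zero_add, plucker, hM]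
    simp [det_fin_three]
  rw [hdet]
  positivity

variable [NeZero n]

theorem edgePlucker_add_two_pos (hS : IsPolygonSlack S) (hrank : S.rank ≤ 3) (i : ZMod n) :
    0 < edgePlucker (S.submatrix ![0, 1, 2] id) i (i + 2) := by
  let E := edgePlucker (S.submatrix ![0, 1, 2] id)
  have hstep (t : ZMod n) (ht : 0 < E t (t + 2)) : 0 < E (t + 1) (t + 1 + 2) := by
    have hmul : S (t + 1) t * E (t + 1) (t + 1 + 2) = S (t + 1) (t + 1 + 2) * E t (t + 2) := by
      have hflip : E (t + 1) t = E t (t + 2) := edgePlucker_add_one_self _ t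
      rw [← hflip]
      exact mul_plucker_eq_of_rank_le hrank _ (hS.apply_self _) (hS.apply_add_one _) _ _
    exact pos_of_mul_pos_right (hmul ▸ mul_pos (hS.pos_add_two _) ht) (hS.pos_add_one_self t).le
  have h₀ : 0 < E 0 (0 + 2) := (zero_add (2 : ZMod n)).symm ▸ edgePlucker_zero_two_pos hS
  exact forall_of_forall_imp_add (P := fun t => 0 < E t (t + 2)) isUnit_one hstep h₀ i

theorem exists_eq_diagonal_mul_edgePlucker (hS : IsPolygonSlack S) (hrank : S.rank ≤ 3) :
    ∃ (r : ZMod n → K) (M : Matrix (Fin 3) (ZMod n) K),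
      (∀ i, 0 < r i) ∧ IsPolygonSlack (edgePlucker M) ∧ S = diagonal r * edgePlucker M := by
  let M := S.submatrix ![0, 1, 2] id
  have hE := edgePlucker_add_two_pos hS hrank
  have hmul (i j : ZMod n) :
      S i j * edgePlucker M i (i + 2) = S i (i + 2) * edgePlucker M i j :=
    mul_plucker_eq_of_rank_le hrank _ (hS.apply_self i) (hS.apply_add_one i) _ _
  refine ⟨fun i => S i (i + 2) / edgePlucker M i (i + 2), M,
    fun i => div_pos (hS.pos_add_two i) (hE i),
    ⟨fun i => plucker_self_left M i _, fun i => plucker_self_right M i _, fun {i j} h h' => ?_⟩, ?_⟩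
  · exact pos_of_mul_pos_right (hmul i j ▸ mul_pos (hS.pos h h') (hE i)) (hS.pos_add_two i).le
  · ext i j
    rw [Matrix.diagonal_mul, div_mul_eq_mul_div, eq_div_iff (hE i).ne', hmul]

end Polygon

section Selection

variable {K : Type*} [CommRing K] [LinearOrder K] [IsStrictOrderedRing K]

theorem mul_lt_mul_of_mul_lt_mul_cross {p q r s x y : K} (hp : 0 ≤ p) (hr : 0 ≤ r) (hx : 0 < x)
    (hy : 0 < y) (h : p * x < q * y) (h' : r * y < s * x) : p * r < q * s := by
  refine lt_of_mul_lt_mul_right ?_ (mul_pos hx hy).le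
  calc
    p * r * (x * y) = p * x * (r * y) := by ring
    _ < q * y * (s * x) := mul_lt_mul'' h h' (mul_nonneg hp hx.le) (mul_nonneg hr hy.le)
    _ = q * s * (x * y) := by ring

theorem lt_of_mul_lt_mul_self {x l r : K} (hl : 0 < l) (hr : 0 < r)
    (h : r * x < l * l) (h' : l * x < r * r) : x < l := by
  by_contra! hlx
  have hrl : r < l :=
    lt_of_mul_lt_mul_right ((mul_le_mul_of_nonneg_left hlx hr.le).trans_lt h) hl.le
  have hlr : l * l < r * r := (mul_le_mul_of_nonneg_left hlx hl.le).trans_lt h'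
  exact hlr.not_gt (mul_self_lt_mul_self hr.le hrl)

theorem prod_mul_prod_lt_of_perm {ι : Type*} [Fintype ι] [Nonempty ι] {f g h k : ι → K}
    (hf : ∀ i, 0 < f i) (hg : ∀ i, 0 < g i) (σ τ ρ π : Equiv.Perm ι)
    (hlt : ∀ i, f (σ i) * g (τ i) < h (ρ i) * k (π i)) :
    (∏ i, f i) * ∏ i, g i < (∏ i, h i) * ∏ i, k i := by
  have hprod := Finset.prod_lt_prod_of_nonempty (s := Finset.univ)
    (fun i _ => mul_pos (hf (σ i)) (hg (τ i))) (fun i _ => hlt i) Finset.univ_nonempty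
  simpa only [Finset.prod_mul_distrib, Equiv.prod_comp] using hprod

section

variable {T L R : ZMod 7 → K} (hT : ∀ j, 0 < T j) (hL : ∀ j, 0 < L j) (hR : ∀ j, 0 < R j)
  (hLL : ∀ j, T (j + 1) * R (j + 6) < L j * L (j + 1))
  (hRR : ∀ j, T (j + 6) * L (j + 1) < R j * R (j + 6))

include hT hL hR hLL hRR

theorem prod_lt_prod_of_mul_lt_mul_adjacent : ∏ j, T j < ∏ j, L j ∧ ∏ j, T j < ∏ j, R j := by
  have hTR : (∏ j, T j) * ∏ j, R j < (∏ j, L j) * ∏ j, L j :=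
    prod_mul_prod_lt_of_perm hT hR (.addRight 1) (.addRight 6) 1 (.addRight 1) hLL
  have hTL : (∏ j, T j) * ∏ j, L j < (∏ j, R j) * ∏ j, R j :=
    prod_mul_prod_lt_of_perm hT hL (.addRight 6) (.addRight 1) 1 (.addRight 6) hRR
  have hLpos : 0 < ∏ j, L j := Finset.prod_pos fun j _ => hL j
  have hRpos : 0 < ∏ j, R j := Finset.prod_pos fun j _ => hR j
  rw [mul_comm] at hTR hTL
  exact ⟨lt_of_mul_lt_mul_self hLpos hRpos hTR hTL, lt_of_mul_lt_mul_self hRpos hLpos hTL hTR⟩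

theorem not_forall_mul_lt_mul_left : ¬ ∀ t, L (t + 5) * T (t + 1) < T (t + 6) * T (t + 2) := by
  intro h
  have hlt : (∏ j, L j) * ∏ j, T j < (∏ j, T j) * ∏ j, T j :=
    prod_mul_prod_lt_of_perm hL hT (.addRight 5) (.addRight 1) (.addRight 6) (.addRight 2) h
  exact (lt_of_mul_lt_mul_right hlt (Finset.prod_nonneg fun j _ => (hT j).le)).not_gt
    (prod_lt_prod_of_mul_lt_mul_adjacent hT hL hR hLL hRR).1

theorem not_forall_mul_lt_mul_right : ¬ ∀ t, R (t + 2) * T (t + 6) < T (t + 1) * T (t + 5) := by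
  intro h
  have hlt : (∏ j, R j) * ∏ j, T j < (∏ j, T j) * ∏ j, T j :=
    prod_mul_prod_lt_of_perm hR hT (.addRight 2) (.addRight 6) (.addRight 1) (.addRight 5) h
  exact (lt_of_mul_lt_mul_right hlt (Finset.prod_nonneg fun j _ => (hT j).le)).not_gt
    (prod_lt_prod_of_mul_lt_mul_adjacent hT hL hR hLL hRR).2

theorem mul_le_mul_add_three {t : ZMod 7} (hleft : L (t + 5) * T (t + 1) < T (t + 6) * T (t + 2)) :
    T (t + 3 + 1) * T (t + 3 + 5) ≤ R (t + 3 + 2) * T (t + 3 + 6) := by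
  by_contra! hright
  have hTT : T (t + 5 + 1) * T (t + 5 + 6) < L (t + 5) * R (t + 5) :=
    mul_lt_mul_of_mul_lt_mul_cross (hT _).le (hT _).le (hR _) (hL _) (hLL _) (hRR _)
  simp only [add_assoc] at hright hTT
  exact hTT.not_gt
    (mul_lt_mul_of_mul_lt_mul_cross (hL _).le (hR _).le (hT _) (hT _) hleft hright)

-- If the first inequality fails at `t`, the second holds at `t + 3`; so if one of them failed at
-- every `t`, it would always be the same one, and the product of its failures is impossible.
theorem exists_mul_le_mul_of_zmod_seven :
    ∃ t, T (t + 6) * T (t + 2) ≤ L (t + 5) * T (t + 1) ∧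
      T (t + 1) * T (t + 5) ≤ R (t + 2) * T (t + 6) := by
  by_contra! hfail
  obtain ⟨t₀, ht₀⟩ := not_forall.mp (not_forall_mul_lt_mul_right hT hL hR hLL hRR)
  have hfirst (t : ZMod 7) (ht : T (t + 1) * T (t + 5) ≤ R (t + 2) * T (t + 6)) :
      L (t + 5) * T (t + 1) < T (t + 6) * T (t + 2) :=
    lt_of_not_ge fun h => (hfail t h).not_ge ht
  have hunit : IsUnit (3 : ZMod 7) := .of_mul_eq_one 5 (by decide)
  exact not_forall_mul_lt_mul_left hT hL hR hLL hRR <|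
    forall_of_forall_imp_add (P := fun t => L (t + 5) * T (t + 1) < T (t + 6) * T (t + 2)) hunit
      (fun t ht => hfirst _ (mul_le_mul_add_three hT hL hR hLL hRR ht))
      (hfirst t₀ (not_lt.mp ht₀))

end

end Selection

section Heptagon

theorem forall_zmod_seven {P : ZMod 7 → Prop} (h₀ : P 0) (h₁ : P 1) (h₂ : P 2) (h₃ : P 3)
    (h₄ : P 4) (h₅ : P 5) (h₆ : P 6) (i : ZMod 7) : P i := by
  fin_cases i <;> assumption

theorem hasNonnegFactorization_six_of_add_eq_add {m R : Type*} [CommRing R] [LinearOrder R]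
    [IsStrictOrderedRing R] {A : Matrix m (Fin 7) R} (hA : ∀ i j, 0 ≤ A i j)
    (h₀₂ : ∀ i, A i 0 + A i 2 = A i 1 + A i 3) (h₄₆ : ∀ i, A i 4 + A i 6 = A i 0 + A i 5)
    (h₁₄ : ∀ i, A i 0 ≤ A i 1 + A i 4) (h₃₆ : ∀ i, A i 0 ≤ A i 3 + A i 6) :
    HasNonnegFactorization (Fin 6) A := by
  let x (i : m) : Fin 3 → R := ![A i 1 - A i 0, 0, A i 6 - A i 0]
  let y (i : m) : Fin 3 → R := ![A i 0, A i 3, A i 4]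
  let cell : Fin 7 → Fin 3 × Fin 3 := ![(1, 0), (0, 0), (0, 1), (1, 1), (1, 2), (2, 2), (2, 0)]
  have harray (i : m) (a b : Fin 3) : x i a + y i b =
      !![A i 1, A i 2, A i 1 + A i 4 - A i 0;
        A i 0, A i 3, A i 4;
        A i 6, A i 3 + A i 6 - A i 0, A i 5] a b := by
    fin_cases a <;> fin_cases b <;> simp [x, y] <;> linarith [h₀₂ i, h₄₆ i]
  have hxy (i : m) (a b : Fin 3) : 0 ≤ x i a + y i b := by
    rw [harray]
    fin_cases a <;> fin_cases b <;>
      first | exact hA i _ | exact sub_nonneg.mpr (h₁₄ i) | exact sub_nonneg.mpr (h₃₆ i)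
  have hcell : A = (of fun i (p : Fin 3 × Fin 3) => x i p.1 + y i p.2).submatrix id cell := by
    ext i j
    rw [submatrix_apply, of_apply, harray]
    fin_cases j <;> rfl
  rw [hcell]
  exact ((hasNonnegFactorization_add x y hxy).submatrix id cell).congr finSumFinEquiv

theorem IsPolygonSlack.hasNonnegFactorization_six {R : Type*} [CommRing R] [LinearOrder R]
    [IsStrictOrderedRing R] {A : Matrix (ZMod 7) (ZMod 7) R} (hA : IsPolygonSlack A)
    (h₀₂ : ∀ i, A i 0 + A i 2 = A i 1 + A i 3) (h₄₆ : ∀ i, A i 4 + A i 6 = A i 0 + A i 5)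
    (h₁ : A 1 0 ≤ A 1 4) (h₂ : A 2 0 ≤ A 2 6) (h₄ : A 4 0 ≤ A 4 1) (h₅ : A 5 0 ≤ A 5 3) :
    HasNonnegFactorization (Fin 6) A := by
  have hn := hA.nonneg
  have hself := hA.apply_self
  have hedge₂ : A 2 3 = 0 := hA.apply_add_one 2
  have hedge₃ : A 3 4 = 0 := hA.apply_add_one 3
  have hedge₅ : A 5 6 = 0 := hA.apply_add_one 5
  have hedge₆ : A 6 0 = 0 := hA.apply_add_one 6
  have hcorner₁₄ : ∀ i, A i 0 ≤ A i 1 + A i 4 := forall_zmod_seven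
    (by linarith [hself 0, hn 0 1, hn 0 4]) (by linarith [hn 1 1])
    (by linarith [h₀₂ 2, hself 2, hn 2 4]) (by linarith [h₀₂ 3, hself 3, hn 3 2, hn 3 4])
    (by linarith [hn 4 4]) (by linarith [h₄₆ 5, hself 5, hn 5 1])
    (by linarith [hn 6 1, hn 6 4])
  have hcorner₃₆ : ∀ i, A i 0 ≤ A i 3 + A i 6 := forall_zmod_seven
    (by linarith [hself 0, hn 0 3, hn 0 6]) (by linarith [h₀₂ 1, hself 1, hn 1 2, hn 1 6])
    (by linarith [hn 2 3]) (by linarith [h₄₆ 3, hn 3 3, hn 3 5])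
    (by linarith [h₄₆ 4, hself 4, hn 4 3, hn 4 5]) (by linarith [hn 5 6])
    (by linarith [hn 6 3, hn 6 6])
  exact hasNonnegFactorization_six_of_add_eq_add hn h₀₂ h₄₆ hcorner₁₄ hcorner₃₆

/-- The scaling of the seven columns after which `v₁ + v₃ = v₀ + v₂` and `v₀ + v₅ = v₄ + v₆`. It is
read off the linear relations among `v₀, v₁, v₂, v₃` and among `v₀, v₄, v₅, v₆`, multiplied so that
their coefficients of `v₀` agree. -/
def arrayWeight {K : Type*} [Mul K] (E : Matrix (ZMod 7) (ZMod 7) K) : ZMod 7 → K :=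
  ![E 1 3 * E 4 6, E 2 0 * E 4 6, E 0 3 * E 4 6, E 0 2 * E 4 6, E 5 0 * E 1 3, E 6 4 * E 1 3,
    E 4 0 * E 1 3]

/-- The condition on the brackets `E i j = [i, i + 1, j]` of a convex heptagon under which the sums
`v₁ + v₄ - v₀` and `v₃ + v₆ - v₀` of the columns scaled by `arrayWeight` are nonnegative on every
edge. -/
structure IsBalanced {K : Type*} [Mul K] [LE K] (E : Matrix (ZMod 7) (ZMod 7) K) : Prop where
  left : E 4 6 * E 0 2 ≤ E 1 4 * E 5 0
  right : E 5 0 * E 1 3 ≤ E 5 3 * E 0 2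

section Bracket

variable {K : Type*} [CommRing K] [LinearOrder K] [IsStrictOrderedRing K]
  {M : Matrix (Fin 3) (ZMod 7) K} (hE : IsPolygonSlack (edgePlucker M))

include hE

theorem edgePlucker_mul_lt_left :
    edgePlucker M 0 2 * edgePlucker M 5 1 < edgePlucker M 0 5 * edgePlucker M 1 6 := by
  have hrel : edgePlucker M 0 5 * edgePlucker M 1 6 =
      edgePlucker M 5 1 * edgePlucker M 0 2 + edgePlucker M 6 1 * edgePlucker M 1 5 :=
    plucker_pentagon M 5 6 0 1 2
  rw [hrel, mul_comm]
  exact lt_add_of_pos_right _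
    (mul_pos (hE.pos (by decide) (by decide)) (hE.pos (by decide) (by decide)))

theorem edgePlucker_mul_lt_right :
    edgePlucker M 5 0 * edgePlucker M 1 6 < edgePlucker M 6 2 * edgePlucker M 5 1 := by
  have hrel : edgePlucker M 5 1 * edgePlucker M 6 2 =
      edgePlucker M 1 6 * edgePlucker M 5 0 + edgePlucker M 6 1 * edgePlucker M 5 2 :=
    plucker_pentagon_reflect M 5 6 0 1 2
  rw [mul_comm (edgePlucker M 6 2), hrel, mul_comm]
  exact lt_add_of_pos_right _
    (mul_pos (hE.pos (by decide) (by decide)) (hE.pos (by decide) (by decide)))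

theorem exists_isBalanced_rotate :
    ∃ t, IsBalanced ((edgePlucker M).submatrix (t + ·) (t + ·)) := by
  have hrotate (j : ZMod 7) : IsPolygonSlack (edgePlucker (M.submatrix id (j + ·))) :=
    (edgePlucker_rotate M j).symm ▸ hE.rotate j
  have hpos {i k : ZMod 7} (hne : k ≠ i) (hsucc : k ≠ i + 1) (j : ZMod 7) :
      0 < edgePlucker M (j + i) (j + k) :=
    (hE.rotate j).pos hne hsucc
  -- `T j = [j - 1, j, j + 1]`, `L j = [j, j + 1, j - 2]` and `R j = [j - 1, j, j + 2]`.
  obtain ⟨t, ht, ht'⟩ := exists_mul_le_mul_of_zmod_seven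
    (T := fun j => edgePlucker M (j + 6) (j + 1)) (L := fun j => edgePlucker M (j + 0) (j + 5))
    (R := fun j => edgePlucker M (j + 6) (j + 2)) (hpos (by decide) (by decide))
    (hpos (by decide) (by decide)) (hpos (by decide) (by decide))
    (fun j => by
      have h := edgePlucker_mul_lt_left (hrotate j)
      rw [edgePlucker_rotate] at h
      simp only [add_assoc]
      exact h)
    (fun j => by
      have h := edgePlucker_mul_lt_right (hrotate j)
      rw [edgePlucker_rotate] at h
      simp only [add_assoc]
      exact h)
  simp only [add_assoc] at ht ht'
  exact ⟨t, (mul_comm _ _).trans_le ht', ht⟩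

theorem edgePlucker_mul_le_left :
    edgePlucker M 4 0 * edgePlucker M 1 3 ≤ edgePlucker M 2 0 * edgePlucker M 4 1 := by
  have hrel : edgePlucker M 2 0 * edgePlucker M 4 1 * edgePlucker M 3 1 =
      edgePlucker M 4 0 * edgePlucker M 1 3 * edgePlucker M 3 1 +
        (edgePlucker M 1 3 * edgePlucker M 3 5 * edgePlucker M 0 4 +
          edgePlucker M 4 1 * edgePlucker M 0 3 * edgePlucker M 2 4) :=
    plucker_hexagon M 0 1 2 3 4 5
  have hn := hE.nonneg
  refine le_of_mul_le_mul_right ?_ (hE.pos (by decide) (by decide) : 0 < edgePlucker M 3 1)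
  rw [hrel]
  exact le_add_of_nonneg_right (add_nonneg (mul_nonneg (mul_nonneg (hn _ _) (hn _ _)) (hn _ _))
    (mul_nonneg (mul_nonneg (hn _ _) (hn _ _)) (hn _ _)))

theorem edgePlucker_mul_le_right :
    edgePlucker M 2 0 * edgePlucker M 4 6 ≤ edgePlucker M 4 0 * edgePlucker M 2 6 := by
  have hrel : edgePlucker M 4 0 * edgePlucker M 2 6 * edgePlucker M 3 6 =
      edgePlucker M 2 0 * edgePlucker M 4 6 * edgePlucker M 3 6 +
        (edgePlucker M 4 6 * edgePlucker M 2 4 * edgePlucker M 6 3 +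
          edgePlucker M 2 6 * edgePlucker M 6 4 * edgePlucker M 3 5) :=
    plucker_hexagon_reflect M 2 3 4 5 6 0
  have hn := hE.nonneg
  refine le_of_mul_le_mul_right ?_ (hE.pos (by decide) (by decide) : 0 < edgePlucker M 3 6)
  rw [hrel]
  exact le_add_of_nonneg_right (add_nonneg (mul_nonneg (mul_nonneg (hn _ _) (hn _ _)) (hn _ _))
    (mul_nonneg (mul_nonneg (hn _ _) (hn _ _)) (hn _ _)))

theorem arrayWeight_pos (j : ZMod 7) : 0 < arrayWeight (edgePlucker M) j := by
  revert j
  refine forall_zmod_seven ?_ ?_ ?_ ?_ ?_ ?_ ?_ <;>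
    exact mul_pos (hE.pos (by decide) (by decide)) (hE.pos (by decide) (by decide))

end Bracket

theorem hasNonnegFactorization_of_isBalanced {K : Type*} [Field K] [LinearOrder K]
    [IsStrictOrderedRing K] {M : Matrix (Fin 3) (ZMod 7) K}
    (hE : IsPolygonSlack (edgePlucker M)) (hb : IsBalanced (edgePlucker M)) :
    HasNonnegFactorization (Fin 6) (edgePlucker M) := by
  let E := edgePlucker M
  let w := arrayWeight E
  have hw : ∀ j, 0 < w j := arrayWeight_pos hE
  have hE₁₃ : 0 ≤ E 1 3 := hE.nonneg _ _
  have hE₄₆ : 0 ≤ E 4 6 := hE.nonneg _ _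
  have hE₁₀ : E 1 0 = E 0 2 := edgePlucker_add_one_self M 0
  have h₀₂ (i : ZMod 7) : E i 0 * w 0 + E i 2 * w 2 = E i 1 * w 1 + E i 3 * w 3 := by
    have hrel : E 0 3 * E i 2 + E 1 3 * E i 0 = E 0 2 * E i 3 + E 2 0 * E i 1 :=
      plucker_cramer M 0 1 2 3 i (i + 1)
    change E i 0 * (E 1 3 * E 4 6) + E i 2 * (E 0 3 * E 4 6) =
      E i 1 * (E 2 0 * E 4 6) + E i 3 * (E 0 2 * E 4 6)
    linear_combination E 4 6 * hrel
  have h₄₆ (i : ZMod 7) : E i 4 * w 4 + E i 6 * w 6 = E i 0 * w 0 + E i 5 * w 5 := by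
    have hrel : E 4 0 * E i 6 + E 5 0 * E i 4 = E 4 6 * E i 0 + E 6 4 * E i 5 :=
      plucker_cramer M 4 5 6 0 i (i + 1)
    change E i 4 * (E 5 0 * E 1 3) + E i 6 * (E 4 0 * E 1 3) =
      E i 0 * (E 1 3 * E 4 6) + E i 5 * (E 6 4 * E 1 3)
    linear_combination E 1 3 * hrel
  have h₁ : E 1 0 * (E 1 3 * E 4 6) ≤ E 1 4 * (E 5 0 * E 1 3) := by
    linear_combination E 1 3 * hb.left + E 1 3 * E 4 6 * hE₁₀
  have h₂ : E 2 0 * (E 1 3 * E 4 6) ≤ E 2 6 * (E 4 0 * E 1 3) := by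
    linear_combination E 1 3 * edgePlucker_mul_le_right hE
  have h₄ : E 4 0 * (E 1 3 * E 4 6) ≤ E 4 1 * (E 2 0 * E 4 6) := by
    linear_combination E 4 6 * edgePlucker_mul_le_left hE
  have h₅ : E 5 0 * (E 1 3 * E 4 6) ≤ E 5 3 * (E 0 2 * E 4 6) := by
    linear_combination E 4 6 * hb.right
  refine HasNonnegFactorization.of_mul_diagonal hw
    ((hE.mul_diagonal hw).hasNonnegFactorization_six ?_ ?_ ?_ ?_ ?_ ?_) <;>
    simpa only [Matrix.mul_diagonal]

end Heptagon

theorem heptagon_slack_nonneg_rank_le_six_general {K : Type*} [Field K] [LinearOrder K]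
    [IsStrictOrderedRing K] {S : Matrix (ZMod 7) (ZMod 7) K} (hS : IsPolygonSlack S)
    (hrank : S.rank ≤ 3) : HasNonnegFactorization (Fin 6) S := by
  have : NeZero (2 : ZMod 7) := ⟨by decide⟩
  obtain ⟨r, M, hr, hE, rfl⟩ := exists_eq_diagonal_mul_edgePlucker hS hrank
  refine HasNonnegFactorization.diagonal_mul ?_ fun i => (hr i).le
  obtain ⟨t, hb⟩ := exists_isBalanced_rotate hE
  have hfac : HasNonnegFactorization (Fin 6) ((edgePlucker M).submatrix (t + ·) (t + ·)) := by
    rw [← edgePlucker_rotate] at hb ⊢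
    exact hasNonnegFactorization_of_isBalanced (edgePlucker_rotate M t ▸ hE.rotate t) hb
  have hback := hfac.submatrix (-t + ·) (-t + ·)
  simp only [submatrix_submatrix, Function.comp_def, add_neg_cancel_left] at hback
  exact hback

/-- The slack matrix `S i j = c i (p j) - β i` of a convex heptagon
(vertices `p : ZMod 7 → ℝ²` in cyclic order, edge `i` supported by `c i ⬝ x ≥ β i`)
has nonnegative rank at most 6. -/
theorem heptagon_slack_nonneg_rank_le_six
    (p : ZMod 7 → (Fin 2 → ℝ))
    (hspan : affineSpan ℝ (Set.range p) = ⊤)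
    (c : ZMod 7 → ((Fin 2 → ℝ) →ₗ[ℝ] ℝ)) (β : ZMod 7 → ℝ)
    (hedge : ∀ i : ZMod 7, c i (p i) = β i ∧ c i (p (i + 1)) = β i)
    (hpos : ∀ i j : ZMod 7, j ≠ i → j ≠ i + 1 → β i < c i (p j)) :
    ∃ (B : Matrix (ZMod 7) (Fin 6) ℝ) (C : Matrix (Fin 6) (ZMod 7) ℝ),
      (∀ i j, 0 ≤ B i j) ∧ (∀ i j, 0 ≤ C i j) ∧
      (Matrix.of fun i j : ZMod 7 => c i (p j) - β i) = B * C := by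
  refine heptagon_slack_nonneg_rank_le_six_general
    ⟨fun i => sub_eq_zero.mpr (hedge i).1, fun i => sub_eq_zero.mpr (hedge i).2,
      fun h h' => sub_pos.mpr (hpos _ _ h h')⟩ ?_
  simpa using rank_dual_apply_sub_le c β p
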